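/- Let k be a totally real number field in which the rational prime 2 is unramified (equivalently, 2 does not divide the discriminant of k), and let K = k(i) be the totally imaginary quadratic extension of k obtained by adjoining a square root i of −1. Then the only roots of unity in K are ±1 and ±i; that is, every root of unity ζ ∈ K satisfies ζ⁴ = 1. -/

import Mathlib

/-!
Write a root of unity as `ζ = a + b i` with `a, b ∈ k`. As `k` is totally real, `a - b i` is the
complex conjugate `ζ⁻¹`, so `a² + b² = 1`, and `2a = ζ + ζ⁻¹` and `2b = -i (ζ - ζ⁻¹)` are algebraic
integers `u`, `v` with `u² + v² = 4`. Since `2` is unramified, `𝓞 k / 2` is reduced: from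
`(u + v)² ≡ 0` modulo `2` one gets `u + v = 2w`, then `u² ≡ 0` modulo `2`, and so `2 ∣ u` and
likewise `2 ∣ v`. Hence `a` and `b` are themselves integral. If both were nonzero, `a² + b² = 1`
would make every conjugate of `a` smaller than `1` in absolute value, contradicting `|N(a)| ≥ 1`.
So `ab = 0`, and `ζ⁴ = (a² - b²)² = (a² + b²)² = 1`.
-/

open NumberField
open scoped ComplexConjugate

section Unramified

-- Radicality is checked at each prime `Q` over `p`, where `p` generates the maximal ideal of `S_Q`.
lemma isRadical_map_of_isUnramifiedIn {R S : Type*} [CommRing R] [CommRing S] [Algebra R S]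
    [Algebra.EssFiniteType R S] {p : Ideal R} [p.IsMaximal] (hp : Algebra.IsUnramifiedIn S p) :
    (p.map (algebraMap R S)).IsRadical := by
  intro x hx
  refine Ideal.mem_of_localization_maximal fun Q hQ ↦ ?_
  by_cases hpQ : p.map (algebraMap R S) ≤ Q
  · have : Q.LiesOver p :=
      ⟨‹p.IsMaximal›.eq_of_le Ideal.IsPrime.ne_top' (Ideal.map_le_iff_le_comap.mp hpQ)⟩
    have hxQ : x ∈ Q := hQ.isPrime.radical_le_iff.mpr hpQ hx
    let := Localization.AtPrime.algebraOfLiesOver p Q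
    rw [Ideal.map_map, ← IsScalarTower.algebraMap_eq,
      ((Algebra.isUnramifiedAt_iff_map_eq R p Q).mp (hp Q hQ.isPrime inferInstance)).2,
      ← Localization.AtPrime.map_eq_maximalIdeal]
    exact Ideal.mem_map_of_mem _ hxQ
  · obtain ⟨y, hy, hyQ⟩ := SetLike.not_le_iff_exists.mp hpQ
    rw [Ideal.eq_top_of_isUnit_mem _ (Ideal.mem_map_of_mem _ hy)
      (IsLocalization.map_units (Localization.AtPrime Q) (⟨y, hyQ⟩ : Q.primeCompl))]
    exact Submodule.mem_top

lemma isRadical_intCast_of_not_dvd_discr {k : Type*} [Field k] [NumberField k] {p : ℤ}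
    (hp : Prime p) (hpk : ¬ p ∣ discr k) : IsRadical (p : 𝓞 k) := by
  have := PrincipalIdealRing.isMaximal_of_irreducible hp.irreducible
  have hrad := isRadical_map_of_isUnramifiedIn <|
    (not_dvd_discr_iff_isUnramifiedIn k (𝓞 k) hp).mp hpk
  rwa [Ideal.map_span, Set.image_singleton, eq_intCast, ← isRadical_iff_span_singleton] at hrad

end Unramified

section Circle

lemma two_dvd_of_four_dvd_sq_add_sq {R : Type*} [CommRing R] [IsCancelMulZero R] [NeZero (2 : R)]
    (hR : IsRadical (2 : R)) {u v : R} (huv : 4 ∣ u ^ 2 + v ^ 2) : 2 ∣ u := by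
  obtain ⟨c, hc⟩ := huv
  obtain ⟨w, hw⟩ : 2 ∣ u + v := hR 2 _ ⟨2 * c + u * v, by linear_combination hc⟩
  have hmul : u * v = 2 * (w ^ 2 - c) :=
    mul_left_cancel₀ (two_ne_zero (α := R)) (by linear_combination (u + v + 2 * w) * hw - hc)
  exact hR 2 _ ⟨u * w - w ^ 2 + c, by linear_combination u * hw - hmul⟩

lemma exists_algebraMap_eq_of_sq_add_sq_eq_one {A F : Type*} [CommRing A] [Field F] [Algebra A F]
    [FaithfulSMul A F] [NeZero (2 : F)] (hA : IsRadical (2 : A)) {a b : F}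
    (hab : a ^ 2 + b ^ 2 = 1) (ha : ∃ u : A, algebraMap A F u = 2 * a)
    (hb : ∃ v : A, algebraMap A F v = 2 * b) : ∃ c : A, algebraMap A F c = a := by
  obtain ⟨u, hu⟩ := ha
  obtain ⟨v, hv⟩ := hb
  have hinj := FaithfulSMul.algebraMap_injective A F
  have : IsDomain A := hinj.isDomain
  have : NeZero (2 : A) :=
    ⟨fun h ↦ two_ne_zero (α := F) (by rw [← map_ofNat (algebraMap A F) 2, h, map_zero])⟩
  have huv : u ^ 2 + v ^ 2 = 4 := hinj <| by
    simp only [map_add, map_pow, map_ofNat, hu, hv]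
    linear_combination 4 * hab
  obtain ⟨c, rfl⟩ := two_dvd_of_four_dvd_sq_add_sq hA huv.symm.dvd
  exact ⟨c, mul_left_cancel₀ two_ne_zero (by rw [← hu, map_mul, map_ofNat])⟩

variable {k : Type*} [Field k]

lemma isTotallyReal_of_forall_im_eq_zero (hk : ∀ φ : k →+* ℂ, ∀ x : k, (φ x).im = 0) :
    IsTotallyReal k where
  isReal v := InfinitePlace.isReal_iff.mpr <| ComplexEmbedding.isReal_iff.mpr <|
    RingHom.ext fun x ↦ Complex.conj_eq_iff_im.mpr (hk v.embedding x)

variable [NumberField k] [IsTotallyReal k]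

lemma mul_eq_zero_of_sq_add_sq_eq_one {a b : 𝓞 k} (hab : a ^ 2 + b ^ 2 = 1) : a * b = 0 := by
  by_contra! h
  obtain ⟨ha, hb⟩ := mul_ne_zero_iff.mp h
  have hlt (v : InfinitePlace k) : v a < 1 := by
    set σ := InfinitePlace.embedding_of_isReal (IsTotallyReal.isReal v)
    have hσ : σ a ^ 2 + σ b ^ 2 = 1 := by
      simpa using congr_arg (fun x : 𝓞 k ↦ σ x) hab
    have hσb : 0 < σ b ^ 2 := sq_pos_of_ne_zero (by simpa using hb)
    rw [← InfinitePlace.norm_embedding_of_isReal (IsTotallyReal.isReal v), Real.norm_eq_abs,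
      ← sq_lt_one_iff_abs_lt_one]
    linarith
  obtain ⟨v⟩ : Nonempty (InfinitePlace k) := inferInstance
  exact (hlt v).not_ge (InfinitePlace.one_le_of_lt_one ha fun v _ ↦ hlt v)

lemma mul_eq_zero_of_isIntegral_two_mul (hk : IsRadical (2 : 𝓞 k)) {a b : k}
    (hab : a ^ 2 + b ^ 2 = 1) (ha : IsIntegral ℤ (2 * a)) (hb : IsIntegral ℤ (2 * b)) :
    a * b = 0 := by
  rw [IsIntegralClosure.isIntegral_iff (A := 𝓞 k)] at ha hb
  obtain ⟨a, rfl⟩ := exists_algebraMap_eq_of_sq_add_sq_eq_one hk hab ha hb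
  obtain ⟨b, rfl⟩ := exists_algebraMap_eq_of_sq_add_sq_eq_one hk ((add_comm _ _).trans hab) hb ha
  have hab' : a ^ 2 + b ^ 2 = 1 := RingOfIntegers.ext (by simpa using hab)
  rw [← map_mul, mul_eq_zero_of_sq_add_sq_eq_one hab', map_zero]

end Circle

section AdjoinI

lemma exists_add_mul_of_mem_adjoin {R A : Type*} [CommRing R] [CommRing A] [Algebra R A] {i : A}
    (hi : i ^ 2 = -1) {x : A} (hx : x ∈ Algebra.adjoin R {i}) :
    ∃ a b : R, x = algebraMap R A a + algebraMap R A b * i := by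
  let f : QuadraticAlgebra R (-1) 0 →ₐ[R] A :=
    QuadraticAlgebra.lift ⟨i, by simpa [sq] using hi⟩
  have hif : i ∈ f.range := ⟨⟨0, 1⟩, by simp [f, QuadraticAlgebra.lift]⟩
  obtain ⟨z, rfl⟩ := Algebra.adjoin_le (Set.singleton_subset_iff.mpr hif) hx
  exact ⟨z.re, z.im, by simp [f, QuadraticAlgebra.lift, Algebra.smul_def]⟩

lemma add_mul_pow_four_eq_one {R : Type*} [CommRing R] {a b i : R} (hi : i ^ 2 = -1)
    (hab : a ^ 2 + b ^ 2 = 1) (hmul : a * b = 0) : (a + b * i) ^ 4 = 1 := by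
  have hsq : (a + b * i) ^ 2 = a ^ 2 - b ^ 2 := by linear_combination b ^ 2 * hi + 2 * i * hmul
  calc (a + b * i) ^ 4 = (a ^ 2 - b ^ 2) ^ 2 := by rw [← hsq]; ring
    _ = (a ^ 2 + b ^ 2) ^ 2 := by linear_combination -4 * (a * b) * hmul
    _ = 1 := by rw [hab, one_pow]

lemma isIntegral_two_mul_of_isIntegral_add_mul {R B C : Type*} [CommRing R] [CommRing B]
    [CommRing C] [Algebra R B] [Algebra R C] [Algebra B C] [IsScalarTower R B C]
    [FaithfulSMul B C] {i : C} (hi : i ^ 2 = -1) {a b : B}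
    (hadd : IsIntegral R (algebraMap B C a + algebraMap B C b * i))
    (hsub : IsIntegral R (algebraMap B C a - algebraMap B C b * i)) :
    IsIntegral R (2 * a) ∧ IsIntegral R (2 * b) := by
  have hint : IsIntegral R i := .of_pow two_pos (hi ▸ isIntegral_one.neg)
  simp only [← isIntegral_algebraMap_iff (FaithfulSMul.algebraMap_injective B C), map_mul,
    map_ofNat]
  constructor
  · convert hadd.add hsub using 1
    ring
  · convert hint.mul (hsub.sub hadd) using 1
    linear_combination 2 * algebraMap B C b * hi

variable {k K : Type*} [Field k] [IsTotallyReal k] [Field K] [Algebra k K] {i : K}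

lemma conj_map_add_mul (φ : K →+* ℂ) (hi : i ^ 2 = -1) (a b : k) :
    conj (φ (algebraMap k K a + algebraMap k K b * i)) =
      φ (algebraMap k K a - algebraMap k K b * i) := by
  have hreal (c : k) : conj (φ (algebraMap k K c)) = φ (algebraMap k K c) :=
    RingHom.congr_fun (IsTotallyReal.complexEmbedding_isReal (φ.comp (algebraMap k K))) c
  have hφi : conj (φ i) = -φ i := by
    have hsq : φ i ^ 2 = Complex.I ^ 2 := by rw [← map_pow, hi, Complex.I_sq, map_neg, map_one]
    obtain h | h := sq_eq_sq_iff_eq_or_eq_neg.mp hsq <;> simp [h]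
  simp [hreal, hφi, sub_eq_add_neg]

lemma add_mul_mul_sub_mul_eq_one (φ : K →+* ℂ) (hi : i ^ 2 = -1) {a b : k}
    (hφ : ‖φ (algebraMap k K a + algebraMap k K b * i)‖ = 1) :
    (algebraMap k K a + algebraMap k K b * i) * (algebraMap k K a - algebraMap k K b * i) = 1 := by
  apply φ.injective
  rw [map_mul, ← conj_map_add_mul φ hi, Complex.mul_conj, Complex.normSq_eq_norm_sq, hφ]
  simp

end AdjoinI

/-- Let `k` be a totally real number field in which 2 is unramified (2 does not divide the
discriminant of `k`), and let `K = k(i)` be the quadratic extension obtained by adjoining a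
square root `i` of `-1`.  Then the only roots of unity in `K` are `±1` and `±i`: every root of
unity `ζ ∈ K` satisfies `ζ ^ 4 = 1`. -/
theorem rootsOfUnity_adjoin_i
    (k K : Type*) [Field k] [NumberField k] [Field K] [NumberField K] [Algebra k K]
    (htr : ∀ φ : k →+* ℂ, ∀ x : k, (φ x).im = 0)
    (h2 : ¬ ((2 : ℤ) ∣ NumberField.discr k))
    (i : K) (hi : i ^ 2 = -1)
    (hgen : Algebra.adjoin k ({i} : Set K) = ⊤)
    (hdeg : Module.finrank k K = 2) :
    ∀ ζ : K, (∃ n : ℕ, 0 < n ∧ ζ ^ n = 1) → ζ ^ 4 = 1 := by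
  rintro ζ ⟨n, hn, hζ⟩
  have := isTotallyReal_of_forall_im_eq_zero htr
  have hrad : IsRadical (2 : 𝓞 k) := by
    exact_mod_cast isRadical_intCast_of_not_dvd_discr Int.prime_two h2
  obtain ⟨φ⟩ : Nonempty (K →+* ℂ) := inferInstance
  have hnorm : ‖φ ζ‖ = 1 :=
    Complex.norm_eq_one_of_pow_eq_one (by rw [← map_pow, hζ, map_one]) hn.ne'
  obtain ⟨a, b, rfl⟩ := exists_add_mul_of_mem_adjoin hi (hgen ▸ Algebra.mem_top : ζ ∈ _)
  have hinv := add_mul_mul_sub_mul_eq_one φ hi hnorm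
  have hsub : (algebraMap k K a - algebraMap k K b * i) ^ n = 1 := by
    simpa [mul_pow, hζ] using congr_arg (· ^ n) hinv
  have hab : algebraMap k K a ^ 2 + algebraMap k K b ^ 2 = 1 := by
    linear_combination hinv + algebraMap k K b ^ 2 * hi
  obtain ⟨ha, hb⟩ := isIntegral_two_mul_of_isIntegral_add_mul hi
    (.of_pow hn (hζ ▸ isIntegral_one : IsIntegral ℤ _)) (.of_pow hn (hsub ▸ isIntegral_one))
  have hmul : a * b = 0 := mul_eq_zero_of_isIntegral_two_mul hrad
    ((algebraMap k K).injective (by simpa using hab)) ha hb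
  exact add_mul_pow_four_eq_one hi hab (by rw [← map_mul, hmul, map_zero])
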